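/- arXiv:math/0610579 — 2 statements merged into one kernel-verified Lean document; each statement's English description precedes it below -/
import Mathlib

section
/- The relation (3.2) in central extensions of matrix Lie algebras: let N ≥ 4, let W be a Lie algebra over K, let M be the Lie algebra of N×N matrices over 𝒜 with the commutator bracket, and let φ : W → M be a morphism of Lie K-algebras whose kernel is contained in the center of W. Let i, j, k, l ∈ {1, …, N} be pairwise distinct, let a, b, c ∈ 𝒜, and suppose x₁, x₂, x₃, x₄ ∈ W satisfy φ(x₁) = E_ik(a), φ(x₂) = E_kj(bc), φ(x₃) = E_il(ab), φ(x₄) = E_lj(c). Then ⁅x₁, x₂⁆ = ⁅x₃, x₄⁆, provided also that E_kl(b) and E_lj(c) lie in the range of φ. -/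
open Matrix

attribute [local instance 100] LieRing.ofAssociativeRing

/-!
Both brackets map to `E_ij(abc)`: with `y` a preimage of `E_kl(b)`, the elements `⁅y, x₄⁆` and
`⁅x₁, y⁆` are further preimages of `E_kj(bc)` and `E_il(ab)`. Since the kernel of `φ` is central, a
bracket in `W` depends only on the images of its arguments, so the relation becomes
`⁅x₁, ⁅y, x₄⁆⁆ = ⁅⁅x₁, y⁆, x₄⁆`. This is the Jacobi identity up to the term `⁅y, ⁅x₁, x₄⁆⁆`, which
vanishes because `⁅E_ik(a), E_lj(c)⁆ = 0` makes `⁅x₁, x₄⁆` central.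
-/

section CentralKernel

variable {R L M : Type*} [CommRing R] [LieRing L] [LieAlgebra R L] [LieRing M] [LieAlgebra R M]
  {f : L →ₗ⁅R⁆ M}

theorem ker_le_center_iff :
    f.ker ≤ LieAlgebra.center R L ↔ ∀ z, f z = 0 → ∀ y : L, ⁅z, y⁆ = 0 := by
  simp only [← LieAlgebra.self_module_ker_eq_center, SetLike.le_def, LieHom.mem_ker,
    LieModule.mem_ker]

theorem lie_eq_lie_of_map_eq (hf : f.ker ≤ LieAlgebra.center R L) {x x' y y' : L}
    (hx : f x = f x') (hy : f y = f y') : ⁅x, y⁆ = ⁅x', y'⁆ := by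
  have left_congr {u u' : L} (h : f u = f u') (v : L) : ⁅u, v⁆ = ⁅u', v⁆ := by
    rw [← sub_eq_zero, ← sub_lie]
    exact ker_le_center_iff.mp hf _ (by rw [map_sub, h, sub_self]) v
  calc
    ⁅x, y⁆ = ⁅x', y⁆ := left_congr hx y
    _ = -⁅y, x'⁆ := (lie_skew x' y).symm
    _ = -⁅y', x'⁆ := by rw [left_congr hy x']
    _ = ⁅x', y'⁆ := lie_skew x' y'

theorem lie_lie_assoc_of_lie_map_eq_zero (hf : f.ker ≤ LieAlgebra.center R L) {x z : L}
    (hxz : ⁅f x, f z⁆ = 0) (y : L) : ⁅x, ⁅y, z⁆⁆ = ⁅⁅x, y⁆, z⁆ := by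
  have hy : ⁅y, ⁅x, z⁆⁆ = ⁅y, (0 : L)⁆ :=
    lie_eq_lie_of_map_eq hf rfl (by rw [LieHom.map_lie, hxz, map_zero])
  rw [leibniz_lie, hy, lie_zero, add_zero]

end CentralKernel

section MatrixUnits

variable {n A : Type*} [Fintype n] [DecidableEq n] [Ring A]

theorem lie_single_single_same {i k : n} (hik : i ≠ k) (j : n) (a b : A) :
    ⁅single i j a, single j k b⁆ = single i k (a * b) := by
  rw [Ring.lie_def, single_mul_single_same, single_mul_single_of_ne _ _ _ _ hik.symm, sub_zero]

theorem lie_single_single_of_ne {i j k l : n} (hjk : j ≠ k) (hil : i ≠ l) (a b : A) :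
    ⁅single i j a, single k l b⁆ = 0 := by
  rw [Ring.lie_def, single_mul_single_of_ne _ _ _ _ hjk, single_mul_single_of_ne _ _ _ _ hil.symm,
    sub_zero]

end MatrixUnits

theorem central_extension_relation_3_2_general
    {K A n W : Type*} [CommRing K] [Ring A] [Algebra K A] [Fintype n] [DecidableEq n]
    [LieRing W] [LieAlgebra K W] {φ : W →ₗ⁅K⁆ Matrix n n A}
    (hφ : φ.ker ≤ LieAlgebra.center K W)
    {i j k l : n} (hij : i ≠ j) (hil : i ≠ l) (hjk : j ≠ k) (hkl : k ≠ l)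
    {a b c : A} {x₁ x₂ x₃ x₄ : W}
    (hx₁ : φ x₁ = single i k a)
    (hx₂ : φ x₂ = single k j (b * c))
    (hx₃ : φ x₃ = single i l (a * b))
    (hx₄ : φ x₄ = single l j c)
    (hb : single k l b ∈ Set.range φ) :
    ⁅x₁, x₂⁆ = ⁅x₃, x₄⁆ := by
  obtain ⟨y, hy⟩ := hb
  have hyx₄ : φ ⁅y, x₄⁆ = φ x₂ := by
    rw [LieHom.map_lie, hy, hx₄, hx₂, lie_single_single_same hjk.symm]
  have hx₁y : φ ⁅x₁, y⁆ = φ x₃ := by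
    rw [LieHom.map_lie, hx₁, hy, hx₃, lie_single_single_same hil]
  have hx₁x₄ : ⁅φ x₁, φ x₄⁆ = 0 := by
    rw [hx₁, hx₄, lie_single_single_of_ne hkl hij]
  calc
    ⁅x₁, x₂⁆ = ⁅x₁, ⁅y, x₄⁆⁆ := lie_eq_lie_of_map_eq hφ rfl hyx₄.symm
    _ = ⁅⁅x₁, y⁆, x₄⁆ := lie_lie_assoc_of_lie_map_eq_zero hφ hx₁x₄ y
    _ = ⁅x₃, x₄⁆ := lie_eq_lie_of_map_eq hφ hx₁y rfl

/-- relation (3.2) in central extensions of matrix Lie algebras.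
Let `N ≥ 4`, let `φ : W → M_N(𝒜)` (matrices with the commutator bracket) be a
morphism of Lie `K`-algebras whose kernel lies in the center of `W`, let
`i, j, k, l` be pairwise distinct, and suppose `φ(x₁) = E_ik(a)`,
`φ(x₂) = E_kj(bc)`, `φ(x₃) = E_il(ab)`, `φ(x₄) = E_lj(c)`, with `E_kl(b)` and
`E_lj(c)` in the range of `φ`.  Then `⁅x₁, x₂⁆ = ⁅x₃, x₄⁆`. -/
theorem central_extension_relation_3_2
    (K : Type*) [Field K] (h2 : (2 : K) ≠ 0) (h3 : (3 : K) ≠ 0)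
    (A : Type*) [Ring A] [Algebra K A]
    (N : ℕ) (hN : 4 ≤ N)
    (W : Type*) [LieRing W] [LieAlgebra K W]
    (φ : W →ₗ⁅K⁆ Matrix (Fin N) (Fin N) A)
    (hc : ∀ z : W, φ z = 0 → ∀ y : W, ⁅z, y⁆ = 0)
    (i j k l : Fin N)
    (hij : i ≠ j) (hik : i ≠ k) (hil : i ≠ l)
    (hjk : j ≠ k) (hjl : j ≠ l) (hkl : k ≠ l)
    (a b c : A) (x₁ x₂ x₃ x₄ : W)
    (hx₁ : φ x₁ = single i k a)
    (hx₂ : φ x₂ = single k j (b * c))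
    (hx₃ : φ x₃ = single i l (a * b))
    (hx₄ : φ x₄ = single l j c)
    (hrange₁ : single k l b ∈ Set.range φ)
    (hrange₂ : single l j c ∈ Set.range φ) :
    ⁅x₁, x₂⁆ = ⁅x₃, x₄⁆ :=
  central_extension_relation_3_2_general (ker_le_center_iff.mpr hc) hij hil hjk hkl
    hx₁ hx₂ hx₃ hx₄ hrange₁
end

section
/- The key vanishing for rank 4 with char K ≠ 2: let K be a field with char K ≠ 2, let N ≥ 4, let W be a Lie algebra over K, let M be the Lie algebra of N×N matrices over 𝒜 with the commutator bracket, and let φ : W → M be a morphism of Lie K-algebras whose kernel is contained in the center of W and whose range contains every elementary matrix E_pq(x) with p ≠ q and x ∈ 𝒜. Then for pairwise distinct indices i, j, k, l ∈ {1, …, N}, all a, b ∈ 𝒜, and any e₁, e₂ ∈ W with φ(e₁) = E_ij(a) and φ(e₂) = E_kl(b), one has ⁅e₁, e₂⁆ = 0. -/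
open Matrix

attribute [local instance 100] LieRing.ofAssociativeRing

/-!
In a Lie algebra `L`, let `h` act on `x` and `y` modulo the centre with weights `c` and `d`, and let
`⁅x, y⁆` be central. Brackets only depend on their arguments modulo the centre, so the Leibniz rule
for `ad h` gives `(c + d) • ⁅x, y⁆ = ⁅h, ⁅x, y⁆⁆ = 0`. For `E_ij(a)` and `E_kl(b)`, the matrix
`E_ii(1) - E_jj(1) = ⁅E_ij(1), E_ji(1)⁆` has weights `2` and `0`.
-/

section CentralKernel

variable {R L L' : Type*} [CommRing R] [LieRing L] [LieAlgebra R L] [LieRing L'] [LieAlgebra R L']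
  {φ : L →ₗ⁅R⁆ L'}

theorem lie_eq_lie_of_ker_le_center (hφ : φ.ker ≤ LieAlgebra.center R L) {x x' y y' : L}
    (hx : φ x = φ x') (hy : φ y = φ y') : ⁅x, y⁆ = ⁅x', y'⁆ := by
  have sub_mem_center {z z' : L} (hz : φ z = φ z') : z - z' ∈ LieAlgebra.center R L :=
    hφ (LieHom.mem_ker.2 (by rw [map_sub, hz, sub_self]))
  have h_left : ⁅y, x - x'⁆ = 0 := sub_mem_center hx y
  have h_right : ⁅x', y - y'⁆ = 0 := sub_mem_center hy x'
  calc
    ⁅x, y⁆ = ⁅x', y⁆ := by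
      rw [← sub_eq_zero, ← sub_lie, ← lie_skew, h_left, neg_zero]
    _ = ⁅x', y'⁆ := by
      rw [← sub_eq_zero, ← lie_sub, h_right]

theorem add_smul_lie_eq_zero_of_ker_le_center (hφ : φ.ker ≤ LieAlgebra.center R L) {h x y : L}
    {c d : R} (hx : ⁅φ h, φ x⁆ = c • φ x) (hy : ⁅φ h, φ y⁆ = d • φ y) (hxy : ⁅φ x, φ y⁆ = 0) :
    (c + d) • ⁅x, y⁆ = 0 := by
  have hcx : ⁅⁅h, x⁆, y⁆ = ⁅c • x, y⁆ :=
    lie_eq_lie_of_ker_le_center hφ (by rw [LieHom.map_lie, hx, map_smul]) rfl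
  have hdy : ⁅x, ⁅h, y⁆⁆ = ⁅x, d • y⁆ :=
    lie_eq_lie_of_ker_le_center hφ rfl (by rw [LieHom.map_lie, hy, map_smul])
  have hxy_central : ⁅h, ⁅x, y⁆⁆ = ⁅h, 0⁆ :=
    lie_eq_lie_of_ker_le_center hφ rfl (by rw [LieHom.map_lie, hxy, map_zero])
  calc
    (c + d) • ⁅x, y⁆ = ⁅⁅h, x⁆, y⁆ + ⁅x, ⁅h, y⁆⁆ := by
      rw [hcx, hdy, smul_lie, lie_smul, add_smul]
    _ = ⁅h, ⁅x, y⁆⁆ := (leibniz_lie h x y).symm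
    _ = 0 := by rw [hxy_central, lie_zero]

end CentralKernel

section ElementaryMatrices

variable {n A : Type*} [Fintype n] [DecidableEq n] [Ring A]

theorem lie_single_single_swap (i j : n) (a b : A) :
    ⁅single i j a, single j i b⁆ = diagonal (Pi.single i (a * b) - Pi.single j (b * a)) := by
  rw [LieRing.of_associative_ring_bracket, single_mul_single_same, single_mul_single_same,
    ← diagonal_single, ← diagonal_single, diagonal_sub]
  rfl

theorem lie_diagonal_algebraMap_single {R : Type*} [CommRing R] [Algebra R A] (d : n → R)
    (i j : n) (a : A) :
    ⁅diagonal (algebraMap R A ∘ d), single i j a⁆ = (d i - d j) • single i j a := by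
  ext p q
  rw [LieRing.of_associative_ring_bracket, Matrix.sub_apply, diagonal_mul, mul_diagonal,
    Matrix.smul_apply, Function.comp_apply, Function.comp_apply, ← Algebra.commutes (d q),
    ← Algebra.smul_def, ← Algebra.smul_def, ← sub_smul]
  by_cases h : i = p ∧ j = q
  · rw [h.1, h.2]
  · rw [single_apply_of_ne _ _ _ _ _ h, smul_zero, smul_zero]

end ElementaryMatrices

section PreimagesOfElementaryMatrices

variable {R A n W : Type*} [CommRing R] [Ring A] [Algebra R A] [Fintype n] [DecidableEq n]
  [LieRing W] [LieAlgebra R W] {φ : W →ₗ⁅R⁆ Matrix n n A} {i j k l : n} {a b : A} {e₁ e₂ : W}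

theorem lie_eq_zero_of_diagonal_mem_range (hφ : φ.ker ≤ LieAlgebra.center R W) {d : n → R}
    (hd : diagonal (algebraMap R A ∘ d) ∈ φ.range)
    (hreg : IsSMulRegular W ((d i - d j) + (d k - d l))) (hjk : j ≠ k) (hil : i ≠ l)
    (he₁ : φ e₁ = single i j a) (he₂ : φ e₂ = single k l b) : ⁅e₁, e₂⁆ = 0 := by
  obtain ⟨h, hh⟩ := (LieHom.mem_range φ _).1 hd
  apply hreg.right_eq_zero_of_smul
  apply add_smul_lie_eq_zero_of_ker_le_center hφ (h := h)
  · rw [hh, he₁, lie_diagonal_algebraMap_single]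
  · rw [hh, he₂, lie_diagonal_algebraMap_single]
  · rw [he₁, he₂, lie_single_single_of_ne hjk hil]

theorem central_extension_disjoint_bracket_eq_zero_general (h2 : IsSMulRegular W (2 : R))
    (hφ : φ.ker ≤ LieAlgebra.center R W)
    (hrange_ij : single i j 1 ∈ φ.range) (hrange_ji : single j i 1 ∈ φ.range)
    (hij : i ≠ j) (hik : i ≠ k) (hil : i ≠ l) (hjk : j ≠ k) (hjl : j ≠ l)
    (he₁ : φ e₁ = single i j a) (he₂ : φ e₂ = single k l b) : ⁅e₁, e₂⁆ = 0 := by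
  let d : n → R := Pi.single i 1 - Pi.single j 1
  have hd : diagonal (algebraMap R A ∘ d) ∈ φ.range := by
    have hd_map : algebraMap R A ∘ d = Pi.single i (1 * 1) - Pi.single j (1 * 1) := by
      ext m
      simp [d, Pi.single_apply, apply_ite (algebraMap R A)]
    rw [hd_map, ← lie_single_single_swap]
    exact φ.range.lie_mem hrange_ij hrange_ji
  have hweight : (d i - d j) + (d k - d l) = 2 := by
    simp [d, hij, hij.symm, hik.symm, hil.symm, hjk.symm, hjl.symm, one_add_one_eq_two]
  exact lie_eq_zero_of_diagonal_mem_range hφ hd (hweight ▸ h2) hjk hil he₁ he₂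

end PreimagesOfElementaryMatrices

/-- the key vanishing for rank 4 with `char K ≠ 2`.  Let `N ≥ 4`,
let `φ : W → M_N(𝒜)` (matrices with the commutator bracket) be a morphism of Lie
`K`-algebras whose kernel lies in the center of `W` and whose range contains every
elementary matrix `E_pq(x)` with `p ≠ q`.  Then for pairwise distinct indices
`i, j, k, l` and any preimages `e₁, e₂` of `E_ij(a)`, `E_kl(b)`, one has
`⁅e₁, e₂⁆ = 0`. -/
theorem central_extension_disjoint_bracket_eq_zero
    (K : Type*) [Field K] (h2 : (2 : K) ≠ 0)
    (A : Type*) [Ring A] [Algebra K A]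
    (N : ℕ) (hN : 4 ≤ N)
    (W : Type*) [LieRing W] [LieAlgebra K W]
    (φ : W →ₗ⁅K⁆ Matrix (Fin N) (Fin N) A)
    (hc : ∀ z : W, φ z = 0 → ∀ y : W, ⁅z, y⁆ = 0)
    (hrange : ∀ p q : Fin N, p ≠ q → ∀ x : A, Matrix.single p q x ∈ Set.range φ)
    (i j k l : Fin N)
    (hij : i ≠ j) (hik : i ≠ k) (hil : i ≠ l)
    (hjk : j ≠ k) (hjl : j ≠ l) (hkl : k ≠ l)
    (a b : A) (e₁ e₂ : W)
    (he₁ : φ e₁ = Matrix.single i j a)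
    (he₂ : φ e₂ = Matrix.single k l b) :
    ⁅e₁, e₂⁆ = 0 := by
  have hφ : φ.ker ≤ LieAlgebra.center K W := fun z hz y ↦ by rw [← lie_skew, hc z hz, neg_zero]
  exact central_extension_disjoint_bracket_eq_zero_general (.of_ne_zero h2) hφ
    (hrange i j hij 1) (hrange j i hij.symm 1) hij hik hil hjk hjl he₁ he₂
end
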